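/- Let d ≥ 2 and n = d + 2, and let y and y₁ be two linearly independent solutions of the Schrödinger equation with parameters (α, λ). Let f = y/y₁ (with the convention that f takes an arbitrary value at the isolated zeros of y₁). Then for every j ∈ {0,…,n−1} the function f has an asymptotic value in the Stokes sector S_j: either there exists w ∈ ℂ such that f(r·e^{iθ}) → w as r → +∞ for every θ with |θ − 2πj/n| < π/n, or |f(r·e^{iθ})| → +∞ as r → +∞ for every such θ. -/

import Mathlib

open Complex Filter Topology

/-- The polynomial potential `P_α(z) = z^d + α_{d-1} z^{d-1} + ⋯ + α₁ z`. -/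
noncomputable def Pol (d : ℕ) (α : Fin (d - 1) → ℂ) (z : ℂ) : ℂ :=
  z ^ d + ∑ i : Fin (d - 1), α i * z ^ ((i : ℕ) + 1)

/-- `y` is an (entire) solution of the Schrödinger equation `y'' = (P_α - λ) y`. -/
def IsSol (d : ℕ) (α : Fin (d - 1) → ℂ) (lam : ℂ) (y : ℂ → ℂ) : Prop :=
  Differentiable ℂ y ∧ ∀ z : ℂ, deriv (deriv y) z = (Pol d α z - lam) * y z

/-- `θ` is a ray direction of the Stokes sector `S_j`. -/
def DirIn (n j : ℕ) (θ : ℝ) : Prop :=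
  |θ - 2 * Real.pi * j / n| < Real.pi / n

/-- `y` is subdominant in the Stokes sector `S_j`: it tends to `0` along every ray in `S_j`. -/
def Subdominant (n j : ℕ) (y : ℂ → ℂ) : Prop :=
  ∀ θ : ℝ, DirIn n j θ →
    Tendsto (fun r : ℝ => y ((r : ℂ) * Complex.exp (θ * Complex.I))) atTop (𝓝 0)

/-!
After a rotation the sector is `S_0`, where `s(z) = z ^ (d / 2)` is a square root of the leading
term of the potential `Q`. The components `A = y' + s y` and `B = y' - s y` of a solution satisfy
`A' = s A + small` and `B' = -s B + small`, and moving from `z` in the direction `e` they grow and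
decay as long as `re (e s(z)) > 0`, which holds far out on every ray of `S_0`. Hence the cone
`2 ‖A‖ ≤ ‖B‖` propagates backwards along such paths: a solution is either eventually in the cone
along a ray, and then `A, B → 0` (it is recessive), or `‖A - B‖ = ‖2 s y‖ → ∞`. Since two
independent recessive solutions would have Wronskian `0`, the quotient of a recessive solution by
an independent one tends to `0`.

If `y₁` is recessive then `f → ∞`. Otherwise, along the positive axis, the sets of `w` for which
`y - w y₁` is in the cone at `t` are compact, nonempty and decreasing in `t`, so some `y - w y₁` is
recessive and `f → w`. Propagating the cone backwards along the segments from `r e` to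
`r e + r e⁻¹ = 2 r re e` shows that recessiveness on the positive axis implies recessiveness on
every ray of `S_0`, so that one `w` serves the whole sector.
-/

/-! ### Growing and decaying modes on the real line -/

lemma le_of_forall_hasDerivAt_nonneg {g : ℝ → ℝ} {t₁ t₂ : ℝ} (h : t₁ ≤ t₂)
    (hg : ∀ t ∈ Set.Icc t₁ t₂, ∃ g', HasDerivAt g g' t ∧ 0 ≤ g') : g t₁ ≤ g t₂ := by
  choose! g' hg' hnonneg using hg
  refine monotoneOn_of_hasDerivWithinAt_nonneg (convex_Icc t₁ t₂)
    (fun t ht => (hg' t ht).continuousAt.continuousWithinAt)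
    (fun t ht => (hg' t (interior_subset ht)).hasDerivWithinAt)
    (fun t ht => hnonneg t (interior_subset ht))
    (Set.left_mem_Icc.2 h) (Set.right_mem_Icc.2 h) h

lemma re_mul_norm_sq_sub_le_inner (μ p z : ℂ) :
    μ.re * ‖z‖ ^ 2 - ‖z‖ * ‖p‖ ≤ inner ℝ z (μ * z + p) := by
  have hμ : inner ℝ z (μ * z) = μ.re * ‖z‖ ^ 2 := by
    rw [Complex.inner, mul_assoc, Complex.mul_conj', ← ofReal_pow, re_mul_ofReal]
  have hp := neg_le_of_abs_le (abs_real_inner_le_norm z p)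
  rw [inner_add_right, hμ]
  linarith

lemma isCompact_setOf_mul_norm_sub_le {𝕜 : Type*} [NormedField 𝕜] [ProperSpace 𝕜]
    {a b a' b' : 𝕜} {c : ℝ} (h : ‖b'‖ < c * ‖a'‖) :
    IsCompact {w : 𝕜 | c * ‖a - w * a'‖ ≤ ‖b - w * b'‖} := by
  have hc : 0 < c := pos_of_mul_pos_left ((norm_nonneg b').trans_lt h) (norm_nonneg a')
  refine Metric.isCompact_of_isClosed_isBounded (isClosed_le (by fun_prop) (by fun_prop)) ?_
  refine isBounded_iff_forall_norm_le.2 ⟨(‖b‖ + c * ‖a‖) / (c * ‖a'‖ - ‖b'‖), fun w hw => ?_⟩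
  have hlow : ‖w‖ * ‖a'‖ - ‖a‖ ≤ ‖a - w * a'‖ := by
    rw [← norm_mul, norm_sub_rev]
    exact norm_sub_norm_le _ _
  have hup : ‖b - w * b'‖ ≤ ‖b‖ + ‖w‖ * ‖b'‖ := by
    rw [← norm_mul]
    exact norm_sub_le _ _
  have hchain : c * (‖w‖ * ‖a'‖ - ‖a‖) ≤ ‖b‖ + ‖w‖ * ‖b'‖ :=
    (mul_le_mul_of_nonneg_left hlow hc.le).trans (le_trans hw hup)
  rw [le_div_iff₀ (by linarith)]
  linarith

/-- At `t` the function `A` is a growing and `B` a decaying mode: they satisfy `A' = μ A + p` and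
`B' = -μ B + q` with a rate `re μ ≥ 1` and couplings `p`, `q` which are small relative to the
rate. Any constant up to `2 / 9` in place of `1 / 5` would do for `mode_form_coercive`. -/
def IsModePairAt (A B : ℝ → ℂ) (t : ℝ) : Prop :=
  ∃ μ p q : ℂ, 1 ≤ μ.re ∧
    HasDerivAt A (μ * A t + p) t ∧ ‖p‖ ≤ μ.re / 5 * (‖A t‖ + ‖B t‖) ∧
    HasDerivAt B (-(μ * B t) + q) t ∧ ‖q‖ ≤ μ.re / 5 * (‖A t‖ + ‖B t‖)

lemma mode_form_coercive {K σ a b : ℝ} (hK : K ∈ Set.Icc (1 / 4) 4) (hσ : 1 ≤ σ) :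
    a ^ 2 + K * b ^ 2 ≤ 2 * (σ * a ^ 2 - a * (σ / 5 * (a + b)))
      + K * (2 * (σ * b ^ 2 - b * (σ / 5 * (a + b)))) := by
  obtain ⟨hK₁, hK₂⟩ := hK
  have hnonneg : 0 ≤ a ^ 2 + K * b ^ 2 := by positivity
  -- Affine in `K`, so it follows by completing squares at the two ends `K = 1/4` and `K = 4`.
  have hdisc : 2 * (1 + K) * (a * b) ≤ 3 * (a ^ 2 + K * b ^ 2) := by
    nlinarith [mul_nonneg (sub_nonneg.2 hK₂) (sq_nonneg (6 * a - 5 / 2 * b)),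
      mul_nonneg (sub_nonneg.2 hK₂) (sq_nonneg b), mul_nonneg (sub_nonneg.2 hK₁) (sq_nonneg b),
      mul_nonneg (sub_nonneg.2 hK₁) (sq_nonneg (3 * a - 5 * b))]
  nlinarith [mul_nonneg (sub_nonneg.2 hσ) hnonneg,
    mul_nonneg (zero_le_one.trans hσ) (sub_nonneg.2 hdisc)]

namespace IsModePairAt

variable {A B : ℝ → ℂ}

lemma exists_hasDerivAt_form {t : ℝ} (h : IsModePairAt A B t) {K : ℝ}
    (hK : K ∈ Set.Icc (1 / 4) 4) :
    ∃ D', HasDerivAt (fun s => ‖A s‖ ^ 2 - K * ‖B s‖ ^ 2) D' t ∧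
      ‖A t‖ ^ 2 + K * ‖B t‖ ^ 2 ≤ D' := by
  obtain ⟨μ, p, q, hμ, hA, hp, hB, hq⟩ := h
  refine ⟨_, hA.norm_sq.sub (hB.norm_sq.const_mul K), ?_⟩
  have hgrow := re_mul_norm_sq_sub_le_inner μ p (A t)
  have hdecay : μ.re * ‖B t‖ ^ 2 - ‖B t‖ * ‖q‖ ≤ -inner ℝ (B t) (-(μ * B t) + q) := by
    rw [← inner_neg_right, neg_add, neg_neg, ← norm_neg q]
    exact re_mul_norm_sq_sub_le_inner μ (-q) (B t)
  have hp' := mul_le_mul_of_nonneg_left hp (norm_nonneg (A t))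
  have hq' := mul_le_mul_of_nonneg_left hq (norm_nonneg (B t))
  have hK₀ : 0 ≤ K := le_trans (by norm_num) hK.1
  have hKdecay := mul_le_mul_of_nonneg_left
    ((sub_le_sub_left hq' (μ.re * ‖B t‖ ^ 2)).trans hdecay) hK₀
  linarith [mode_form_coercive (a := ‖A t‖) (b := ‖B t‖) hK hμ]

lemma form_le_form {t₁ t₂ : ℝ} (ht : t₁ ≤ t₂) (h : ∀ t ∈ Set.Icc t₁ t₂, IsModePairAt A B t) :
    ‖A t₁‖ ^ 2 - 1 / 4 * ‖B t₁‖ ^ 2 ≤ ‖A t₂‖ ^ 2 - 1 / 4 * ‖B t₂‖ ^ 2 := by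
  refine le_of_forall_hasDerivAt_nonneg (g := fun t => ‖A t‖ ^ 2 - 1 / 4 * ‖B t‖ ^ 2) ht
    fun t ht => ?_
  obtain ⟨D', hD', hle⟩ := (h t ht).exists_hasDerivAt_form ⟨le_rfl, by norm_num⟩
  exact ⟨D', hD', le_trans (by positivity) hle⟩

lemma two_mul_norm_le_of_le {t₁ t₂ : ℝ} (ht : t₁ ≤ t₂)
    (h : ∀ t ∈ Set.Icc t₁ t₂, IsModePairAt A B t) (h₂ : 2 * ‖A t₂‖ ≤ ‖B t₂‖) :
    2 * ‖A t₁‖ ≤ ‖B t₁‖ := by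
  have hform := form_le_form ht h
  have hsq := pow_le_pow_left₀ (by positivity) h₂ 2
  exact le_of_sq_le_sq (by linarith) (norm_nonneg _)

lemma tendsto_zero (h : ∀ᶠ t in atTop, IsModePairAt A B t)
    (hrec : ∀ᶠ t in atTop, 2 * ‖A t‖ ≤ ‖B t‖) : Tendsto A atTop (𝓝 0) ∧ Tendsto B atTop (𝓝 0) := by
  obtain ⟨R, hR⟩ := eventually_atTop.1 (h.and hrec)
  set C := Real.exp R * (4 * ‖B R‖ ^ 2 - ‖A R‖ ^ 2)
  have hbound : ∀ t ≥ R, ‖B t‖ ^ 2 ≤ C * Real.exp (-t) := by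
    intro t ht
    have hmono := le_of_forall_hasDerivAt_nonneg
      (g := fun t => Real.exp t * (‖A t‖ ^ 2 - 4 * ‖B t‖ ^ 2)) ht fun s hs => by
        obtain ⟨D', hD', hle⟩ := (hR s hs.1).1.exists_hasDerivAt_form ⟨by norm_num, le_rfl⟩
        refine ⟨_, (Real.hasDerivAt_exp s).mul hD', ?_⟩
        rw [← mul_add]
        exact mul_nonneg (Real.exp_pos s).le (by linarith [sq_nonneg ‖A s‖])
    have hsq := pow_le_pow_left₀ (by positivity) (hR t ht).2 2
    rw [Real.exp_neg, ← div_eq_mul_inv, le_div_iff₀' (Real.exp_pos t)]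
    calc Real.exp t * ‖B t‖ ^ 2
        ≤ Real.exp t * -(‖A t‖ ^ 2 - 4 * ‖B t‖ ^ 2) := by
          gcongr
          linarith [sq_nonneg ‖B t‖]
      _ ≤ C := by simp only [C]; linarith
  have hB : Tendsto (fun t => ‖B t‖) atTop (𝓝 0) := by
    have hexp : Tendsto (fun t => C * Real.exp (-t)) atTop (𝓝 0) := by
      simpa using Real.tendsto_exp_neg_atTop_nhds_zero.const_mul C
    have hsq := squeeze_zero' (Eventually.of_forall fun t => sq_nonneg ‖B t‖)
      ((eventually_ge_atTop R).mono hbound) hexp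
    simpa using hsq.sqrt
  refine ⟨squeeze_zero_norm' ?_ hB, tendsto_zero_iff_norm_tendsto_zero.2 hB⟩
  filter_upwards [hrec] with t ht
  linarith [norm_nonneg (A t)]

lemma eventually_norm_lt (h : ∀ᶠ t in atTop, IsModePairAt A B t)
    (hrec : ¬ ∀ᶠ t in atTop, 2 * ‖A t‖ ≤ ‖B t‖) : ∀ᶠ t in atTop, ‖B t‖ < 2 * ‖A t‖ := by
  obtain ⟨R, hR⟩ := eventually_atTop.1 h
  obtain ⟨t₀, hlt, ht₀⟩ := ((not_eventually.1 hrec).and_eventually (eventually_ge_atTop R)).exists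
  filter_upwards [eventually_ge_atTop t₀] with t ht
  by_contra! hle
  exact hlt (two_mul_norm_le_of_le ht (fun s hs => hR s (ht₀.trans hs.1)) hle)

lemma tendsto_form_atTop (h : ∀ᶠ t in atTop, IsModePairAt A B t)
    (hrec : ¬ ∀ᶠ t in atTop, 2 * ‖A t‖ ≤ ‖B t‖) :
    Tendsto (fun t => ‖A t‖ ^ 2 - 4 * ‖B t‖ ^ 2) atTop atTop := by
  obtain ⟨t₀, ht₀⟩ := eventually_atTop.1 (h.and (eventually_norm_lt h hrec))
  set c := ‖A t₀‖ ^ 2 - 1 / 4 * ‖B t₀‖ ^ 2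
  have hc : 0 < c := by
    have := pow_lt_pow_left₀ (ht₀ t₀ le_rfl).2 (norm_nonneg _) two_ne_zero
    simp only [c]
    linarith
  have hlinear : ∀ t ≥ t₀, ‖A t₀‖ ^ 2 - 4 * ‖B t₀‖ ^ 2 - c * t₀ + c * t
      ≤ ‖A t‖ ^ 2 - 4 * ‖B t‖ ^ 2 := by
    intro t ht
    have := le_of_forall_hasDerivAt_nonneg
      (g := fun t => ‖A t‖ ^ 2 - 4 * ‖B t‖ ^ 2 - c * t) ht fun s hs => by
        obtain ⟨D', hD', hle⟩ := (ht₀ s hs.1).1.exists_hasDerivAt_form ⟨by norm_num, le_rfl⟩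
        refine ⟨_, hD'.sub ((hasDerivAt_id s).const_mul c), ?_⟩
        have hcs : c ≤ ‖A s‖ ^ 2 - 1 / 4 * ‖B s‖ ^ 2 :=
          form_le_form hs.1 fun s hs => (ht₀ s hs.1).1
        linarith [sq_nonneg ‖B s‖]
    linarith
  exact tendsto_atTop_mono' _ ((eventually_ge_atTop t₀).mono hlinear)
    (tendsto_atTop_add_const_left _ _ (tendsto_id.const_mul_atTop hc))

lemma tendsto_norm_sub_atTop (h : ∀ᶠ t in atTop, IsModePairAt A B t)
    (hrec : ¬ ∀ᶠ t in atTop, 2 * ‖A t‖ ≤ ‖B t‖) :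
    Tendsto (fun t => ‖A t - B t‖) atTop atTop := by
  refine tendsto_atTop.2 fun M => ?_
  filter_upwards [(tendsto_form_atTop h hrec).eventually_ge_atTop (4 * M ^ 2)] with t ht
  have hM : 2 * M ≤ ‖A t‖ := le_of_sq_le_sq (by linarith [sq_nonneg ‖B t‖]) (norm_nonneg _)
  have hBA : 2 * ‖B t‖ ≤ ‖A t‖ := le_of_sq_le_sq (by linarith [sq_nonneg M]) (norm_nonneg _)
  linarith [norm_sub_norm_le (A t) (B t)]

lemma exists_eventually_sub_mul {A' B' : ℝ → ℂ} (h' : ∀ᶠ t in atTop, IsModePairAt A' B' t)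
    (h : ∀ᶠ t in atTop, ∀ w : ℂ, IsModePairAt (fun s => A s - w * A' s) (fun s => B s - w * B' s) t)
    (hrec : ¬ ∀ᶠ t in atTop, 2 * ‖A' t‖ ≤ ‖B' t‖) :
    ∃ w : ℂ, ∀ᶠ t in atTop, 2 * ‖A t - w * A' t‖ ≤ ‖B t - w * B' t‖ := by
  obtain ⟨t₀, ht₀⟩ := eventually_atTop.1 (h.and (eventually_norm_lt h' hrec))
  let F : Set.Ici t₀ → Set ℂ := fun t => {w | 2 * ‖A t - w * A' t‖ ≤ ‖B t - w * B' t‖}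
  have hanti : Antitone F := fun s t hst w hw =>
    two_mul_norm_le_of_le (A := fun s => A s - w * A' s) (B := fun s => B s - w * B' s) hst
      (fun r hr => (ht₀ r (s.2.trans hr.1)).1 w) hw
  have hcompact : ∀ t, IsCompact (F t) := fun t =>
    isCompact_setOf_mul_norm_sub_le (ht₀ t t.2).2
  have hne : ∀ t, (F t).Nonempty := by
    intro t
    have hA' : A' t ≠ 0 := fun h0 => by
      have := (ht₀ t t.2).2
      rw [h0, norm_zero, mul_zero] at this
      exact this.not_ge (norm_nonneg _)
    refine ⟨A t / A' t, ?_⟩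
    simp only [F, Set.mem_ofPred_eq, div_mul_cancel₀ _ hA', sub_self, norm_zero, mul_zero]
    exact norm_nonneg _
  obtain ⟨w, hw⟩ := IsCompact.nonempty_iInter_of_directed_nonempty_isCompact_isClosed F
    hanti.directed_ge hne hcompact fun t => (hcompact t).isClosed
  exact ⟨w, (eventually_ge_atTop t₀).mono fun t ht => Set.mem_iInter.1 hw ⟨t, ht⟩⟩

end IsModePairAt

/-! ### WKB modes of `y'' = Q y` -/

section WKB

open Asymptotics Bornology

/-- The principal branch `z ^ (d / 2)` of the square root of `z ^ d`. To leading order the WKB modes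
of `y'' = Q y` with `Q ~ z ^ d` are the solutions of `y' = ± wkbRoot d z * y`. -/
noncomputable def wkbRoot (d : ℕ) (z : ℂ) : ℂ := z ^ ((d / 2 : ℝ) : ℂ)

lemma wkbRoot_sq (d : ℕ) (z : ℂ) : wkbRoot d z ^ 2 = z ^ d := by
  rw [wkbRoot, ← cpow_nat_mul, ← cpow_natCast]
  congr 1
  push_cast
  ring

lemma norm_wkbRoot (d : ℕ) (z : ℂ) : ‖wkbRoot d z‖ = ‖z‖ ^ (d / 2 : ℝ) :=
  norm_cpow_real _ _

lemma differentiableAt_wkbRoot (d : ℕ) {z : ℂ} (hz : z ∈ slitPlane) :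
    DifferentiableAt ℂ (wkbRoot d) z :=
  (hasDerivAt_id z).cpow_const hz |>.differentiableAt

lemma norm_deriv_wkbRoot (d : ℕ) {z : ℂ} (hz : z ∈ slitPlane) :
    ‖deriv (wkbRoot d) z‖ = d / 2 * ‖wkbRoot d z‖ / ‖z‖ := by
  have hderiv : deriv (wkbRoot d) z = (d / 2 : ℝ) * (wkbRoot d z / z) := by
    rw [show wkbRoot d = fun z => z ^ ((d / 2 : ℝ) : ℂ) from rfl, Complex.deriv_cpow_const hz,
      cpow_sub _ _ (slitPlane_ne_zero hz), cpow_one]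
  rw [hderiv, norm_mul, norm_div, norm_real, Real.norm_of_nonneg (by positivity), mul_div_assoc]

lemma tendsto_norm_wkbRoot {d : ℕ} (hd : d ≠ 0) :
    Tendsto (fun z => ‖wkbRoot d z‖) (cobounded ℂ) atTop := by
  simp only [norm_wkbRoot]
  exact (tendsto_rpow_atTop (by positivity)).comp tendsto_norm_cobounded_atTop

lemma re_mul_wkbRoot (d : ℕ) (z : ℂ) (e : Circle) :
    (e * wkbRoot d z).re = ‖wkbRoot d z‖ * Real.cos (arg e + d / 2 * arg z) := by
  have he : (e : ℂ) = exp (arg e * I) := by rw [← Circle.coe_exp, Circle.exp_arg]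
  have hroot : wkbRoot d z = ‖wkbRoot d z‖ * exp ((d / 2 * arg z : ℝ) * I) := by
    rw [norm_wkbRoot, wkbRoot, cpow_ofReal, mul_comm (arg z), exp_mul_I, ofReal_cos, ofReal_sin]
  calc (e * wkbRoot d z).re
      = (‖wkbRoot d z‖ * exp ((arg e + d / 2 * arg z : ℝ) * I)).re := by
        rw [ofReal_add, add_mul, exp_add, ← he, mul_left_comm, ← hroot]
    _ = ‖wkbRoot d z‖ * Real.cos (arg e + d / 2 * arg z) := by
        rw [re_ofReal_mul, exp_ofReal_mul_I_re]

lemma norm_mul_cos_le_re_mul_wkbRoot {d : ℕ} {z : ℂ} {e : Circle} {β : ℝ} (hz : |arg z| ≤ β)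
    (he : |arg e| ≤ β) (hβ : (1 + d / 2) * β ≤ Real.pi) :
    ‖wkbRoot d z‖ * Real.cos ((1 + d / 2) * β) ≤ (e * wkbRoot d z).re := by
  have hangle : |arg e + d / 2 * arg z| ≤ (1 + d / 2) * β := by
    calc |arg e + d / 2 * arg z| ≤ |arg (e : ℂ)| + d / 2 * |arg z| := by
          grw [abs_add_le, abs_mul, abs_of_nonneg (by positivity : (0 : ℝ) ≤ d / 2)]
      _ ≤ (1 + d / 2) * β := by
          grw [hz, he]
          exact le_of_eq (by ring)
  rw [re_mul_wkbRoot, ← Real.cos_abs (arg e + _)]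
  exact mul_le_mul_of_nonneg_left
    (Real.cos_le_cos_of_nonneg_of_le_pi (abs_nonneg _) hβ hangle) (norm_nonneg _)

/-- At `z`, moving in the unit direction `e`, the WKB modes of `y'' = Q y` grow and decay at rate
at least `1`, and this rate dominates the error of the WKB approximation. -/
structure ModesSeparated (d : ℕ) (Q : ℂ → ℂ) (z : ℂ) (e : Circle) : Prop where
  mem_slitPlane : z ∈ slitPlane
  one_le_re : 1 ≤ (e * wkbRoot d z).re
  defect_le : ‖Q z - wkbRoot d z ^ 2‖ + ‖deriv (wkbRoot d) z‖
    ≤ 2 / 5 * (e * wkbRoot d z).re * ‖wkbRoot d z‖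

lemma ModesSeparated.one_le_norm {d : ℕ} {Q : ℂ → ℂ} {z : ℂ} {e : Circle}
    (h : ModesSeparated d Q z e) : 1 ≤ ‖wkbRoot d z‖ := by
  have := h.one_le_re.trans (re_le_norm _)
  rwa [norm_mul, Circle.norm_coe, one_mul] at this

-- This is where the opening angle of the Stokes sectors enters.
lemma cos_pos_of_lt_pi_div {d : ℕ} {β : ℝ} (hβ₀ : 0 ≤ β) (hβ : β < Real.pi / (d + 2)) :
    0 < Real.cos ((1 + d / 2) * β) := by
  rw [lt_div_iff₀ (by positivity)] at hβ
  have hnonneg : 0 ≤ (1 + d / 2) * β := by positivity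
  exact Real.cos_pos_of_mem_Ioo ⟨by linarith [Real.pi_pos], by linarith⟩

lemma eventually_modesSeparated {d : ℕ} (hd : d ≠ 0) {Q : ℂ → ℂ}
    (hQ : Q ~[cobounded ℂ] fun z => z ^ d) {β : ℝ} (hβ₀ : 0 ≤ β) (hβ : β < Real.pi / (d + 2)) :
    ∀ᶠ z in cobounded ℂ, |arg z| ≤ β → ∀ e : Circle, |arg e| ≤ β → ModesSeparated d Q z e := by
  set c := Real.cos ((1 + d / 2) * β)
  have hc : 0 < c := cos_pos_of_lt_pi_div hβ₀ hβ
  have hβ' : (d + 2) * β < Real.pi := by rwa [lt_div_iff₀' (by positivity)] at hβ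
  filter_upwards [hQ.isLittleO.def (by positivity : 0 < c / 5),
    (tendsto_norm_wkbRoot hd).eventually_ge_atTop (max 1 (1 / c)),
    eventually_cobounded_le_norm (5 * d / (2 * c)), eventually_ne_cobounded 0]
    with z hQz hsz hz hz₀ harg e he
  obtain ⟨hs₁, hsc⟩ := max_le_iff.1 hsz
  have hre : ‖wkbRoot d z‖ * c ≤ (e * wkbRoot d z).re :=
    norm_mul_cos_le_re_mul_wkbRoot harg he (by linarith [Real.pi_pos])
  have hslit : z ∈ slitPlane := by
    refine mem_slitPlane_iff_arg.2 ⟨fun hpi => ?_, hz₀⟩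
    rw [hpi, abs_of_pos Real.pi_pos] at harg
    nlinarith [Real.pi_pos, d.cast_nonneg (α := ℝ)]
  rw [Pi.sub_apply, ← wkbRoot_sq, norm_pow] at hQz
  have hderiv : ‖deriv (wkbRoot d) z‖ ≤ c / 5 * ‖wkbRoot d z‖ ^ 2 := by
    rw [norm_deriv_wkbRoot d hslit, div_le_iff₀ (norm_pos_iff.2 hz₀)]
    rw [div_le_iff₀ (by positivity)] at hz
    calc d / 2 * ‖wkbRoot d z‖ ≤ c / 5 * ‖z‖ * ‖wkbRoot d z‖ := by gcongr; linarith
      _ ≤ c / 5 * ‖z‖ * ‖wkbRoot d z‖ ^ 2 := by gcongr; exact le_self_pow₀ hs₁ two_ne_zero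
      _ = _ := by ring
  refine ⟨hslit, ((div_le_iff₀ hc).1 hsc).trans hre, ?_⟩
  linarith [mul_le_mul_of_nonneg_right hre (norm_nonneg (wkbRoot d z))]

/-- `y` is an entire solution of `y'' = Q y`, for a potential `Q` which need not be a polynomial. -/
def IsEntireSol (Q y : ℂ → ℂ) : Prop :=
  Differentiable ℂ y ∧ ∀ z, deriv (deriv y) z = Q z * y z

namespace IsEntireSol

variable {Q u v : ℂ → ℂ}

lemma differentiable_deriv (hu : IsEntireSol Q u) : Differentiable ℂ (deriv u) :=
  fun z => (hu.1.analyticAt z).deriv.differentiableAt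

lemma hasDerivAt_deriv (hu : IsEntireSol Q u) (z : ℂ) : HasDerivAt (deriv u) (Q z * u z) z := by
  rw [← hu.2 z]
  exact (hu.differentiable_deriv z).hasDerivAt

lemma deriv_sub_smul (hu : IsEntireSol Q u) (hv : IsEntireSol Q v) (w : ℂ) :
    deriv (u - w • v) = deriv u - w • deriv v := by
  ext z
  rw [deriv_sub (hu.1 z) ((hv.1 z).const_smul w), deriv_const_smul _ (hv.1 z)]
  rfl

lemma sub_smul (hu : IsEntireSol Q u) (hv : IsEntireSol Q v) (w : ℂ) :
    IsEntireSol Q (u - w • v) := by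
  refine ⟨hu.1.sub (hv.1.const_smul w), fun z => ?_⟩
  rw [hu.deriv_sub_smul hv,
    ((hu.hasDerivAt_deriv z).sub ((hv.hasDerivAt_deriv z).const_smul w)).deriv]
  simp only [Pi.sub_apply, Pi.smul_apply, smul_eq_mul]
  ring

lemma comp_mul (hu : IsEntireSol Q u) (ω : ℂ) :
    IsEntireSol (fun z => ω ^ 2 * Q (ω * z)) (fun z => u (ω * z)) := by
  have hmul : ∀ z, HasDerivAt (fun z => ω * z) ω z :=
    fun _ => hasDerivAt_const_mul ω
  have hderiv : deriv (fun z => u (ω * z)) = fun z => deriv u (ω * z) * ω :=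
    funext fun z => ((hu.1 (ω * z)).hasDerivAt.comp z (hmul z)).deriv
  refine ⟨hu.1.comp (differentiable_id.const_mul ω), fun z => ?_⟩
  rw [hderiv]
  refine (((hu.hasDerivAt_deriv (ω * z)).comp z (hmul z)).mul_const ω).deriv.trans ?_
  ring

end IsEntireSol

/-- The Wronskian `u v' - u' v`. -/
noncomputable def wronskian (u v : ℂ → ℂ) (z : ℂ) : ℂ := u z * deriv v z - deriv u z * v z

lemma IsEntireSol.wronskian_eq {Q u v : ℂ → ℂ} (hu : IsEntireSol Q u) (hv : IsEntireSol Q v)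
    (z z' : ℂ) : wronskian u v z = wronskian u v z' := by
  have h : ∀ z, HasDerivAt (wronskian u v) 0 z := fun z =>
    ((((hu.1 z).hasDerivAt).mul (hv.hasDerivAt_deriv z)).sub
      ((hu.hasDerivAt_deriv z).mul ((hv.1 z).hasDerivAt))).congr_deriv (by ring)
  exact is_const_of_deriv_eq_zero (fun z => (h z).differentiableAt) (fun z => (h z).deriv) z z'

lemma exists_eq_smul_of_wronskian_eq_zero {u v : ℂ → ℂ} (hu : Differentiable ℂ u)
    (hv : Differentiable ℂ v) (hv₀ : v ≠ 0) (hW : ∀ z, wronskian u v z = 0) :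
    ∃ c : ℂ, c • v = u := by
  obtain ⟨z₀, hz₀⟩ := Function.ne_iff.1 hv₀
  obtain ⟨ε, hε, hball⟩ := Metric.eventually_nhds_iff_ball.1
    ((hv z₀).continuousAt.eventually_ne hz₀)
  have hderiv : ∀ z ∈ Metric.ball z₀ ε, HasDerivAt (u / v) 0 z := by
    intro z hz
    refine ((hu z).hasDerivAt.div (hv z).hasDerivAt (hball z hz)).congr_deriv ?_
    rw [div_eq_zero_iff]
    have := hW z
    rw [wronskian] at this
    exact Or.inl (by linear_combination -this)
  have hconst : ∀ z ∈ Metric.ball z₀ ε, u z / v z = u z₀ / v z₀ := fun z hz =>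
    Metric.isOpen_ball.is_const_of_deriv_eq_zero (convex_ball z₀ ε).isPreconnected
      (fun z hz => (hderiv z hz).differentiableAt.differentiableWithinAt)
      (fun z hz => (hderiv z hz).deriv) hz (Metric.mem_ball_self hε)
  refine ⟨u z₀ / v z₀, AnalyticOnNhd.eq_of_eventuallyEq (z₀ := z₀)
    (fun z _ => (hv.const_smul (u z₀ / v z₀)).analyticAt z) (fun z _ => hu.analyticAt z) ?_⟩
  filter_upwards [Metric.ball_mem_nhds z₀ hε] with z hz
  rw [Pi.smul_apply, smul_eq_mul, ← hconst z hz, div_mul_cancel₀ _ (hball z hz)]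

lemma IsEntireSol.wronskian_ne_zero {Q u v : ℂ → ℂ} (hu : IsEntireSol Q u)
    (hv : IsEntireSol Q v) (hind : LinearIndependent ℂ ![u, v]) (z : ℂ) :
    wronskian u v z ≠ 0 := by
  have hv₀ : v ≠ 0 := hind.ne_zero 1
  intro hz
  obtain ⟨c, hc⟩ := exists_eq_smul_of_wronskian_eq_zero hu.1 hv.1 hv₀
    fun z' => (hu.wronskian_eq hv z' z).trans hz
  exact (LinearIndependent.pair_iff' hv₀).1 (LinearIndependent.pair_symm_iff.1 hind) c hc

/-- The growing WKB component of `y`; `growPart / (2 * wkbRoot)` is the amplitude of the mode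
`y' = wkbRoot * y`. -/
noncomputable def growPart (d : ℕ) (y : ℂ → ℂ) (z : ℂ) : ℂ := deriv y z + wkbRoot d z * y z

/-- The decaying WKB component of `y`. -/
noncomputable def decayPart (d : ℕ) (y : ℂ → ℂ) (z : ℂ) : ℂ := deriv y z - wkbRoot d z * y z

lemma growPart_sub_decayPart (d : ℕ) (y : ℂ → ℂ) (z : ℂ) :
    growPart d y z - decayPart d y z = 2 * wkbRoot d z * y z := by
  rw [growPart, decayPart]
  ring

lemma growPart_mul_decayPart_sub (d : ℕ) (u v : ℂ → ℂ) (z : ℂ) :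
    growPart d u z * decayPart d v z - decayPart d u z * growPart d v z
      = 2 * wkbRoot d z * wronskian u v z := by
  rw [growPart, decayPart, growPart, decayPart, wronskian]
  ring

lemma IsEntireSol.growPart_sub_smul {Q u v : ℂ → ℂ} (hu : IsEntireSol Q u)
    (hv : IsEntireSol Q v) (d : ℕ) (w z : ℂ) :
    growPart d (u - w • v) z = growPart d u z - w * growPart d v z := by
  simp only [growPart, hu.deriv_sub_smul hv, Pi.sub_apply, Pi.smul_apply, smul_eq_mul]
  ring

lemma IsEntireSol.decayPart_sub_smul {Q u v : ℂ → ℂ} (hu : IsEntireSol Q u)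
    (hv : IsEntireSol Q v) (d : ℕ) (w z : ℂ) :
    decayPart d (u - w • v) z = decayPart d u z - w * decayPart d v z := by
  simp only [decayPart, hu.deriv_sub_smul hv, Pi.sub_apply, Pi.smul_apply, smul_eq_mul]
  ring

lemma ModesSeparated.isModePairAt {d : ℕ} {Q y : ℂ → ℂ} {e : Circle} {γ : ℝ → ℂ} {t : ℝ}
    (h : ModesSeparated d Q (γ t) e) (hy : IsEntireSol Q y) (hγ : HasDerivAt γ e t) :
    IsModePairAt (fun s => growPart d y (γ s)) (fun s => decayPart d y (γ s)) t := by
  set z := γ t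
  have hroot := (differentiableAt_wkbRoot d h.mem_slitPlane).hasDerivAt.mul (hy.1 z).hasDerivAt
  have hgrow := ((hy.hasDerivAt_deriv z).add hroot).comp t hγ
  have hdecay := ((hy.hasDerivAt_deriv z).sub hroot).comp t hγ
  have hmodes : 2 * ‖wkbRoot d z‖ * ‖y z‖ ≤ ‖growPart d y z‖ + ‖decayPart d y z‖ := by
    have := norm_sub_le (growPart d y z) (decayPart d y z)
    rwa [growPart_sub_decayPart, norm_mul, norm_mul, norm_ofNat] at this
  have hcoupling : ∀ s' : ℂ, ‖s'‖ ≤ ‖deriv (wkbRoot d) z‖ →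
      ‖e * ((Q z - wkbRoot d z ^ 2 + s') * y z)‖
        ≤ (e * wkbRoot d z).re / 5 * (‖growPart d y z‖ + ‖decayPart d y z‖) := by
    intro s' hs'
    have hre := zero_le_one.trans h.one_le_re
    calc ‖e * ((Q z - wkbRoot d z ^ 2 + s') * y z)‖
        = ‖Q z - wkbRoot d z ^ 2 + s'‖ * ‖y z‖ := by simp only [norm_mul, Circle.norm_coe, one_mul]
      _ ≤ 2 / 5 * (e * wkbRoot d z).re * ‖wkbRoot d z‖ * ‖y z‖ := by
        grw [norm_add_le, hs', h.defect_le]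
      _ = (e * wkbRoot d z).re / 5 * (2 * ‖wkbRoot d z‖ * ‖y z‖) := by ring
      _ ≤ _ := by gcongr
  refine ⟨e * wkbRoot d z, _, _, h.one_le_re, hgrow.congr_deriv ?_, hcoupling _ le_rfl,
    hdecay.congr_deriv ?_, hcoupling (-deriv (wkbRoot d) z) (norm_neg _).le⟩
  · simp only [growPart, z]
    ring
  · simp only [decayPart, z]
    ring

lemma ne_zero_of_two_mul_norm_growPart_le {d : ℕ} {u v : ℂ → ℂ} {z : ℂ}
    (hu : 2 * ‖growPart d u z‖ ≤ ‖decayPart d u z‖) (hW : wronskian u v z ≠ 0) : u z ≠ 0 := by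
  intro hu₀
  rw [growPart, decayPart, hu₀, mul_zero, add_zero, sub_zero] at hu
  have hderiv : deriv u z = 0 := norm_le_zero_iff.1 (by linarith)
  exact hW (by rw [wronskian, hu₀, hderiv, zero_mul, zero_mul, sub_zero])

/-! ### The sector around the positive axis -/

/-- Far out on the ray through `e`, the WKB modes of `y'' = Q y` separate in the radial
direction. -/
def RaySeparated (d : ℕ) (Q : ℂ → ℂ) (e : Circle) : Prop :=
  ∀ᶠ r : ℝ in atTop, ModesSeparated d Q (r * e) e

/-- Far out on the ray through `e`, the decaying component of `y` dominates the growing one. -/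
def RecessiveAlong (d : ℕ) (y : ℂ → ℂ) (e : Circle) : Prop :=
  ∀ᶠ r : ℝ in atTop, 2 * ‖growPart d y (r * e)‖ ≤ ‖decayPart d y (r * e)‖

lemma hasDerivAt_ofReal_mul_const (e : ℂ) (t : ℝ) : HasDerivAt (fun t : ℝ => t * e) e t := by
  simpa using (hasDerivAt_id t).ofReal_comp.mul_const e

namespace RaySeparated

variable {d : ℕ} {Q u v : ℂ → ℂ} {e : Circle}

lemma eventually_isModePairAt (h : RaySeparated d Q e) :
    ∀ᶠ r : ℝ in atTop, ∀ y, IsEntireSol Q y →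
      IsModePairAt (fun r : ℝ => growPart d y (r * e)) (fun r : ℝ => decayPart d y (r * e)) r :=
  h.mono fun r hr _ hy => hr.isModePairAt (γ := fun r => r * e) hy (hasDerivAt_ofReal_mul_const e r)

lemma exists_recessiveAlong_sub_smul (h : RaySeparated d Q e) (hu : IsEntireSol Q u)
    (hv : IsEntireSol Q v) (hrec : ¬ RecessiveAlong d v e) :
    ∃ w : ℂ, RecessiveAlong d (u - w • v) e := by
  simp only [RecessiveAlong, hu.growPart_sub_smul hv, hu.decayPart_sub_smul hv]
  refine IsModePairAt.exists_eventually_sub_mul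
    (h.eventually_isModePairAt.mono fun r hr => hr v hv)
    (h.eventually_isModePairAt.mono fun r hr w => ?_) hrec
  simpa only [hu.growPart_sub_smul hv, hu.decayPart_sub_smul hv] using hr _ (hu.sub_smul hv w)

lemma tendsto_zero_of_recessiveAlong (h : RaySeparated d Q e) (hu : IsEntireSol Q u)
    (hrec : RecessiveAlong d u e) :
    Tendsto (fun r : ℝ => growPart d u (r * e)) atTop (𝓝 0) ∧
      Tendsto (fun r : ℝ => decayPart d u (r * e)) atTop (𝓝 0) :=
  IsModePairAt.tendsto_zero (h.eventually_isModePairAt.mono fun _ hr => hr u hu) hrec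

lemma tendsto_norm_atTop_of_not_recessiveAlong (h : RaySeparated d Q e) (hv : IsEntireSol Q v)
    (hrec : ¬ RecessiveAlong d v e) :
    Tendsto (fun r : ℝ => ‖2 * wkbRoot d (r * e) * v (r * e)‖) atTop atTop := by
  simpa only [growPart_sub_decayPart] using IsModePairAt.tendsto_norm_sub_atTop
    (h.eventually_isModePairAt.mono fun _ hr => hr v hv) hrec

lemma eventually_ne_zero_of_not_recessiveAlong (h : RaySeparated d Q e) (hv : IsEntireSol Q v)
    (hrec : ¬ RecessiveAlong d v e) : ∀ᶠ r : ℝ in atTop, v (r * e) ≠ 0 :=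
  ((h.tendsto_norm_atTop_of_not_recessiveAlong hv hrec).eventually_gt_atTop 0).mono
    fun _ hr => right_ne_zero_of_mul (norm_pos_iff.1 hr)

lemma not_recessiveAlong (h : RaySeparated d Q e) (hu : IsEntireSol Q u) (hv : IsEntireSol Q v)
    (hind : LinearIndependent ℂ ![u, v]) (hrec : RecessiveAlong d u e) :
    ¬ RecessiveAlong d v e := by
  intro hrec'
  obtain ⟨hAu, hBu⟩ := h.tendsto_zero_of_recessiveAlong hu hrec
  obtain ⟨hAv, hBv⟩ := h.tendsto_zero_of_recessiveAlong hv hrec'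
  have hlim := ((hAu.mul hBv).sub (hBu.mul hAv)).norm
  simp only [growPart_mul_decayPart_sub, hu.wronskian_eq hv _ 0, mul_zero, sub_zero,
    norm_zero] at hlim
  have hW := norm_pos_iff.2 (hu.wronskian_ne_zero hv hind 0)
  obtain ⟨r, hlt, hsep⟩ := ((hlim.eventually_lt_const hW).and h).exists
  rw [norm_mul, norm_mul, norm_ofNat] at hlt
  nlinarith [hsep.one_le_norm]

lemma tendsto_div_of_recessiveAlong (h : RaySeparated d Q e) (hu : IsEntireSol Q u)
    (hv : IsEntireSol Q v) (hind : LinearIndependent ℂ ![u, v]) (hrec : RecessiveAlong d u e) :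
    Tendsto (fun r : ℝ => u (r * e) / v (r * e)) atTop (𝓝 0) := by
  obtain ⟨hA, hB⟩ := h.tendsto_zero_of_recessiveAlong hu hrec
  have hnum : Tendsto (fun r : ℝ => 2 * wkbRoot d (r * e) * u (r * e)) atTop (𝓝 0) := by
    simpa only [growPart_sub_decayPart, sub_zero] using hA.sub hB
  have hden := tendsto_norm_atTop_iff_cobounded.1
    (h.tendsto_norm_atTop_of_not_recessiveAlong hv (h.not_recessiveAlong hu hv hind hrec))
  have hdiv := hnum.mul (tendsto_inv₀_cobounded.comp hden)
  rw [mul_zero] at hdiv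
  refine hdiv.congr' (h.mono fun r hr => ?_)
  have hroot : wkbRoot d (r * e) ≠ 0 :=
    norm_pos_iff.1 (zero_lt_one.trans_le hr.one_le_norm)
  rw [Function.comp_apply, ← div_eq_mul_inv, mul_div_mul_left _ _ (mul_ne_zero two_ne_zero hroot)]

lemma tendsto_norm_div_atTop_of_recessiveAlong (h : RaySeparated d Q e) (hu : IsEntireSol Q u)
    (hv : IsEntireSol Q v) (hind : LinearIndependent ℂ ![u, v]) (hrec : RecessiveAlong d v e) :
    Tendsto (fun r : ℝ => ‖u (r * e) / v (r * e)‖) atTop atTop := by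
  have hind' := LinearIndependent.pair_symm_iff.1 hind
  have hne : ∀ᶠ r : ℝ in atTop, v (r * e) / u (r * e) ∈ ({0}ᶜ : Set ℂ) := by
    filter_upwards [hrec, h.eventually_ne_zero_of_not_recessiveAlong hu
      (h.not_recessiveAlong hv hu hind' hrec)] with r hvr hur
    exact div_ne_zero
      (ne_zero_of_two_mul_norm_growPart_le hvr (hv.wronskian_ne_zero hu hind' _)) hur
  have hinv := tendsto_norm_inv_nhdsNE_zero_atTop.comp (tendsto_nhdsWithin_iff.2
    ⟨h.tendsto_div_of_recessiveAlong hv hu hind' hrec, hne⟩)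
  simpa only [Function.comp_def, inv_div] using hinv

lemma tendsto_div_of_recessiveAlong_sub_smul (h : RaySeparated d Q e) (hu : IsEntireSol Q u)
    (hv : IsEntireSol Q v) (hind : LinearIndependent ℂ ![u, v]) {w : ℂ}
    (hrec : RecessiveAlong d (u - w • v) e) :
    Tendsto (fun r : ℝ => u (r * e) / v (r * e)) atTop (𝓝 w) := by
  have hsub := hu.sub_smul hv w
  have hind' : LinearIndependent ℂ ![u - w • v, v] := by
    rw [sub_eq_add_neg, ← neg_smul]
    exact (LinearIndependent.pair_add_smul_left_iff (-w)).2 hind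
  have hlim := (h.tendsto_div_of_recessiveAlong hsub hv hind' hrec).add_const w
  rw [zero_add] at hlim
  refine hlim.congr' ((h.eventually_ne_zero_of_not_recessiveAlong hv
    (h.not_recessiveAlong hsub hv hind' hrec)).mono fun r hr => ?_)
  rw [Pi.sub_apply, Pi.smul_apply, smul_eq_mul, sub_div, mul_div_cancel_right₀ _ hr,
    sub_add_cancel]

end RaySeparated

lemma abs_arg_le_abs_arg {z w : ℂ} (hw : w ≠ 0) (h : w.re * ‖z‖ ≤ z.re * ‖w‖) :
    |arg z| ≤ |arg w| := by
  rcases eq_or_ne z 0 with rfl | hz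
  · simp
  by_contra! hlt
  have hcos := Real.cos_lt_cos_of_nonneg_of_le_pi (abs_nonneg _) (abs_arg_le_pi z) hlt
  rw [Real.cos_abs, Real.cos_abs, cos_arg hz, cos_arg hw,
    div_lt_div_iff₀ (norm_pos_iff.2 hz) (norm_pos_iff.2 hw)] at hcos
  exact hcos.not_ge h

lemma re_add_mul_inv (e : Circle) (r t : ℝ) :
    (r * e + t * (e⁻¹ : Circle) : ℂ).re = (r + t) * (e : ℂ).re := by
  rw [Circle.coe_inv_eq_conj, add_re, re_ofReal_mul, re_ofReal_mul, conj_re, add_mul]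

lemma abs_arg_add_mul_inv_le {e : Circle} (he : 0 ≤ (e : ℂ).re) {r t : ℝ} (hr : 0 ≤ r)
    (ht : 0 ≤ t) : |arg (r * e + t * (e⁻¹ : Circle))| ≤ |arg e| := by
  refine abs_arg_le_abs_arg e.coe_ne_zero ?_
  have hnorm : ‖(r * e + t * (e⁻¹ : Circle) : ℂ)‖ ≤ r + t := by
    refine (norm_add_le _ _).trans_eq ?_
    rw [norm_mul, norm_mul, Circle.norm_coe, Circle.norm_coe, norm_real, norm_real,
      Real.norm_of_nonneg hr, Real.norm_of_nonneg ht, mul_one, mul_one]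
  rw [re_add_mul_inv, Circle.norm_coe, mul_one, mul_comm]
  gcongr

lemma circle_re_pos_of_abs_arg_lt {d : ℕ} {e : Circle} (he : |arg e| < Real.pi / (d + 2)) :
    0 < (e : ℂ).re := by
  have hle : Real.pi / (d + 2) ≤ Real.pi / 2 := by
    gcongr
    linarith [d.cast_nonneg (α := ℝ)]
  exact (abs_arg_lt_pi_div_two_iff.1 (he.trans_le hle)).resolve_right e.coe_ne_zero

lemma raySeparated_of_abs_arg_lt {d : ℕ} (hd : d ≠ 0) {Q : ℂ → ℂ}
    (hQ : Q ~[cobounded ℂ] fun z => z ^ d) {e : Circle} (he : |arg e| < Real.pi / (d + 2)) :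
    RaySeparated d Q e := by
  have hray : Tendsto (fun r : ℝ => (r * e : ℂ)) atTop (cobounded ℂ) := by
    refine tendsto_norm_atTop_iff_cobounded.1 (tendsto_abs_atTop_atTop.congr fun r => ?_)
    rw [norm_mul, Circle.norm_coe, mul_one, norm_real, Real.norm_eq_abs]
  filter_upwards [hray.eventually (eventually_modesSeparated hd hQ (abs_nonneg _) he),
    eventually_gt_atTop 0] with r hr hr₀
  exact hr (by rw [arg_real_mul _ hr₀]) e le_rfl

-- The point `r * e` is joined to the positive axis by a segment in the direction `e⁻¹`, along
-- which the modes stay separated.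
lemma eventually_modesSeparated_segment {d : ℕ} (hd : d ≠ 0) {Q : ℂ → ℂ}
    (hQ : Q ~[cobounded ℂ] fun z => z ^ d) {e : Circle} (he : |arg e| < Real.pi / (d + 2)) :
    ∀ᶠ r : ℝ in atTop, ∀ t : ℝ, 0 ≤ t → ModesSeparated d Q (r * e + t * (e⁻¹ : Circle)) e⁻¹ := by
  have hre := circle_re_pos_of_abs_arg_lt he
  obtain ⟨R, -, hR⟩ := hasBasis_cobounded_norm.eventually_iff.1
    (eventually_modesSeparated hd hQ (abs_nonneg _) he)
  filter_upwards [eventually_ge_atTop 0, eventually_ge_atTop (R / (e : ℂ).re)] with r hr₀ hr t ht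
  refine hR ?_ (abs_arg_add_mul_inv_le hre.le hr₀ ht) _ (by rw [Circle.coe_inv, abs_arg_inv])
  calc R ≤ r * (e : ℂ).re := (div_le_iff₀ hre).1 hr
    _ ≤ (r + t) * (e : ℂ).re := by gcongr; linarith
    _ ≤ _ := (re_add_mul_inv e r t).symm.trans_le (re_le_norm _)

lemma RecessiveAlong.of_one {d : ℕ} (hd : d ≠ 0) {Q u : ℂ → ℂ}
    (hQ : Q ~[cobounded ℂ] fun z => z ^ d) (hu : IsEntireSol Q u)
    (h : RecessiveAlong d u 1) {e : Circle} (he : |arg e| < Real.pi / (d + 2)) :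
    RecessiveAlong d u e := by
  have haxis : Tendsto (fun r : ℝ => r * (2 * (e : ℂ).re)) atTop atTop :=
    tendsto_id.atTop_mul_const (mul_pos two_pos (circle_re_pos_of_abs_arg_lt he))
  filter_upwards [eventually_modesSeparated_segment hd hQ he, haxis.eventually h,
    eventually_ge_atTop 0] with r hsep hr hr₀
  have hend : (r * e + r * (e⁻¹ : Circle) : ℂ) = (r * (2 * (e : ℂ).re) : ℝ) * (1 : Circle) := by
    rw [Circle.coe_inv_eq_conj, ← mul_add, add_conj, Circle.coe_one, mul_one, ofReal_mul r]
  let γ : ℝ → ℂ := fun t => r * e + t * (e⁻¹ : Circle)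
  have hγ : ∀ t, HasDerivAt γ (e⁻¹ : Circle) t := fun t =>
    (hasDerivAt_ofReal_mul_const _ t).const_add _
  have hcone := IsModePairAt.two_mul_norm_le_of_le hr₀
    (fun t ht => (hsep t ht.1).isModePairAt (γ := γ) hu (hγ t)) (by simpa only [γ, hend] using hr)
  simpa only [γ, ofReal_zero, zero_mul, add_zero] using hcone

theorem exists_tendsto_div_or_tendsto_norm_div_atTop {d : ℕ} (hd : d ≠ 0) {Q u v : ℂ → ℂ}
    (hQ : Q ~[cobounded ℂ] fun z => z ^ d) (hu : IsEntireSol Q u) (hv : IsEntireSol Q v)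
    (hind : LinearIndependent ℂ ![u, v]) :
    (∃ w : ℂ, ∀ e : Circle, |arg e| < Real.pi / (d + 2) →
        Tendsto (fun r : ℝ => u (r * e) / v (r * e)) atTop (𝓝 w)) ∨
    ∀ e : Circle, |arg e| < Real.pi / (d + 2) →
      Tendsto (fun r : ℝ => ‖u (r * e) / v (r * e)‖) atTop atTop := by
  by_cases hrec : RecessiveAlong d v 1
  · exact Or.inr fun e he =>
      (raySeparated_of_abs_arg_lt hd hQ he).tendsto_norm_div_atTop_of_recessiveAlong hu hv hind
        (hrec.of_one hd hQ hv he)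
  · have haxis : RaySeparated d Q 1 := raySeparated_of_abs_arg_lt hd hQ <| by
      rw [Circle.coe_one, arg_one, abs_zero]
      positivity
    obtain ⟨w, hw⟩ := haxis.exists_recessiveAlong_sub_smul hu hv hrec
    exact Or.inl ⟨w, fun e he =>
      (raySeparated_of_abs_arg_lt hd hQ he).tendsto_div_of_recessiveAlong_sub_smul hu hv hind
        (hw.of_one hd hQ (hu.sub_smul hv w) he)⟩

/-! ### Rotation to an arbitrary sector -/

lemma linearIndependent_comp_mul {u v : ℂ → ℂ} (hind : LinearIndependent ℂ ![u, v]) {ω : ℂ}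
    (hω : ω ≠ 0) : LinearIndependent ℂ ![fun z => u (ω * z), fun z => v (ω * z)] := by
  rw [LinearIndependent.pair_iff] at hind ⊢
  refine fun s t h => hind s t (funext fun z => ?_)
  simpa [mul_inv_cancel_left₀ hω] using congrFun h (ω⁻¹ * z)

lemma isEquivalent_mul_comp_mul {d : ℕ} {Q : ℂ → ℂ} (hQ : Q ~[cobounded ℂ] fun z => z ^ d)
    {ω : ℂ} (hω : ω ^ (d + 2) = 1) :
    (fun z => ω ^ 2 * Q (ω * z)) ~[cobounded ℂ] fun z => z ^ d := by
  have hω₀ : ω ≠ 0 := by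
    rintro rfl
    simp at hω
  refine ((IsEquivalent.refl (u := fun _ : ℂ => ω ^ 2)).mul
    (hQ.comp_tendsto (tendsto_mul_left_cobounded hω₀))).congr_right
      (Eventually.of_forall fun z => ?_)
  rw [Pi.mul_apply, Function.comp_apply, mul_pow, ← mul_assoc, ← pow_add, add_comm 2, hω, one_mul]

lemma circle_exp_two_pi_mul_div_pow {n : ℕ} (hn : n ≠ 0) (j : ℕ) :
    (Circle.exp (2 * Real.pi * j / n) : ℂ) ^ n = 1 := by
  have hangle : n * (2 * Real.pi * j / n) = (j : ℤ) * (2 * Real.pi) := by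
    rw [mul_div_cancel₀ _ (by positivity), Int.cast_natCast]
    ring
  rw [← Circle.coe_pow, ← Circle.exp_natCast_mul, hangle, Circle.exp_int_mul_two_pi,
    Circle.coe_one]

lemma isEquivalent_pol_sub {d : ℕ} (hd : d ≠ 0) (α : Fin (d - 1) → ℂ) (lam : ℂ) :
    (fun z => Pol d α z - lam) ~[cobounded ℂ] fun z => z ^ d := by
  have hsum : (fun z : ℂ => ∑ i, α i * z ^ ((i : ℕ) + 1)) =o[cobounded ℂ] fun z => z ^ d :=
    IsLittleO.fun_sum fun i _ =>
      (isLittleO_pow_pow_cobounded_of_lt (Nat.add_lt_of_lt_sub i.is_lt)).const_mul_left (α i)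
  have hconst : (fun _ : ℂ => lam) =o[cobounded ℂ] fun z => z ^ d := by
    simpa using (isLittleO_pow_pow_cobounded_of_lt
      (Nat.pos_of_ne_zero hd)).const_mul_left (R := ℂ) lam
  exact (IsEquivalent.refl.add_isLittleO hsum).sub_isLittleO hconst

theorem stmt14_general {d : ℕ} (hd : d ≠ 0) {Q u v : ℂ → ℂ}
    (hQ : Q ~[cobounded ℂ] fun z => z ^ d) (hu : IsEntireSol Q u) (hv : IsEntireSol Q v)
    (hind : LinearIndependent ℂ ![u, v]) (j : ℕ) :
    (∃ w : ℂ, ∀ θ : ℝ, DirIn (d + 2) j θ →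
        Tendsto (fun r : ℝ => u (r * exp (θ * I)) / v (r * exp (θ * I))) atTop (𝓝 w)) ∨
    ∀ θ : ℝ, DirIn (d + 2) j θ →
      Tendsto (fun r : ℝ => ‖u (r * exp (θ * I)) / v (r * exp (θ * I))‖) atTop atTop := by
  set φ : ℝ := 2 * Real.pi * j / (d + 2 : ℕ)
  set ω := Circle.exp φ
  have hω : (ω : ℂ) ^ (d + 2) = 1 := circle_exp_two_pi_mul_div_pow (by omega) j
  have hrot : ∀ θ r : ℝ, (ω * (r * Circle.exp (θ - φ)) : ℂ) = r * exp (θ * I) := fun θ r => by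
    rw [mul_left_comm, ← Circle.coe_mul, ← Circle.exp_add, add_sub_cancel, Circle.coe_exp]
  have hdir : ∀ θ, DirIn (d + 2) j θ → |arg (Circle.exp (θ - φ))| < Real.pi / (d + 2) := by
    intro θ hθ
    have habs : |θ - φ| < Real.pi / (d + 2 : ℕ) := hθ
    rw [Nat.cast_add, Nat.cast_ofNat] at habs
    have hpi : Real.pi / (d + 2) ≤ Real.pi :=
      div_le_self Real.pi_pos.le (by linarith [d.cast_nonneg (α := ℝ)])
    obtain ⟨hlow, hup⟩ := abs_lt.1 (habs.trans_le hpi)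
    rwa [Circle.arg_exp hlow hup.le]
  refine (exists_tendsto_div_or_tendsto_norm_div_atTop hd (isEquivalent_mul_comp_mul hQ hω)
    (hu.comp_mul ω) (hv.comp_mul ω) (linearIndependent_comp_mul hind ω.coe_ne_zero)).imp
      (fun ⟨w, h⟩ => ⟨w, fun θ hθ => ?_⟩) fun h θ hθ => ?_
  · simpa only [hrot] using h _ (hdir θ hθ)
  · simpa only [hrot] using h _ (hdir θ hθ)

end WKB

theorem stmt14 (d : ℕ) (hd : 2 ≤ d) (n : ℕ) (hn : n = d + 2)
    (α : Fin (d - 1) → ℂ) (lam : ℂ)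
    (y y₁ : ℂ → ℂ) (hy : IsSol d α lam y) (hy₁ : IsSol d α lam y₁)
    (hind : LinearIndependent ℂ ![y, y₁])
    (f : ℂ → ℂ) (hf : f = fun z => y z / y₁ z)
    (j : ℕ) (hj : j < n) :
    (∃ w : ℂ, ∀ θ : ℝ, DirIn n j θ →
        Tendsto (fun r : ℝ => f ((r : ℂ) * Complex.exp (θ * Complex.I))) atTop (𝓝 w)) ∨
    (∀ θ : ℝ, DirIn n j θ →
        Tendsto (fun r : ℝ => ‖f ((r : ℂ) * Complex.exp (θ * Complex.I))‖) atTop atTop) := by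
  subst hn hf
  exact stmt14_general (by omega) (isEquivalent_pol_sub (by omega) α lam) hy hy₁ hind j
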